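/- There is a family of first-order sequents {S_i}_{i<ω} and LK-proofs thereof such that: (1) the size of S_i is polynomial in i; (2) there is no elementary function of i bounding the size of the smallest cut-free LK-proofs of S_i; and (3) the size of the given LK-proofs of S_i (which contain cuts) is polynomially bounded in i. -/

import Mathlib

namespace EpsCalc

/-! ## Syntax: terms and formulas of first-order logic extended by epsilon terms.
We use a locally nameless representation: `bvar` are de Bruijn indices for bound
variables (bound by `all`, `ex`, or `eps`), `fvar` are named free variables. -/

mutual
inductive Tm : Type where
  | bvar : ℕ → Tm
  | fvar : ℕ → Tm
  | func : ℕ → Tms → Tm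
  | eps  : Fm → Tm          -- the epsilon term ε_x A(x)

inductive Tms : Type where
  | nil  : Tms
  | cons : Tm → Tms → Tms

inductive Fm : Type where
  | atom : ℕ → Tms → Fm
  | and  : Fm → Fm → Fm
  | or   : Fm → Fm → Fm
  | imp  : Fm → Fm → Fm
  | not  : Fm → Fm
  | all  : Fm → Fm          -- ∀ binding de Bruijn index 0
  | ex   : Fm → Fm          -- ∃ binding de Bruijn index 0
end

/-! lifting of bound variables (shift indices ≥ k by one) -/
mutual
def liftT (k : ℕ) : Tm → Tm
  | .bvar n => if n < k then .bvar n else .bvar (n+1)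
  | .fvar a => .fvar a
  | .func f ts => .func f (liftTs k ts)
  | .eps A => .eps (liftF (k+1) A)
def liftTs (k : ℕ) : Tms → Tms
  | .nil => .nil
  | .cons t ts => .cons (liftT k t) (liftTs k ts)
def liftF (k : ℕ) : Fm → Fm
  | .atom p ts => .atom p (liftTs k ts)
  | .and A B => .and (liftF k A) (liftF k B)
  | .or A B => .or (liftF k A) (liftF k B)
  | .imp A B => .imp (liftF k A) (liftF k B)
  | .not A => .not (liftF k A)
  | .all A => .all (liftF (k+1) A)
  | .ex A => .ex (liftF (k+1) A)
end

/-! substitution of a term for the bound variable k -/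
mutual
def subT (k : ℕ) (u : Tm) : Tm → Tm
  | .bvar n => if n = k then u else if n < k then .bvar n else .bvar (n-1)
  | .fvar a => .fvar a
  | .func f ts => .func f (subTs k u ts)
  | .eps A => .eps (subF (k+1) (liftT 0 u) A)
def subTs (k : ℕ) (u : Tm) : Tms → Tms
  | .nil => .nil
  | .cons t ts => .cons (subT k u t) (subTs k u ts)
def subF (k : ℕ) (u : Tm) : Fm → Fm
  | .atom p ts => .atom p (subTs k u ts)
  | .and A B => .and (subF k u A) (subF k u B)
  | .or A B => .or (subF k u A) (subF k u B)
  | .imp A B => .imp (subF k u A) (subF k u B)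
  | .not A => .not (subF k u A)
  | .all A => .all (subF (k+1) (liftT 0 u) A)
  | .ex A => .ex (subF (k+1) (liftT 0 u) A)
end

/-- instantiate the outermost bound variable of `A` with the term `t`:  A(t) -/
def inst0 (A : Fm) (t : Tm) : Fm := subF 0 t A

/-! substitution of a term for a *free* variable -/
mutual
def sfvT (a : ℕ) (u : Tm) : Tm → Tm
  | .bvar n => .bvar n
  | .fvar b => if b = a then u else .fvar b
  | .func f ts => .func f (sfvTs a u ts)
  | .eps A => .eps (sfvF a (liftT 0 u) A)
def sfvTs (a : ℕ) (u : Tm) : Tms → Tms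
  | .nil => .nil
  | .cons t ts => .cons (sfvT a u t) (sfvTs a u ts)
def sfvF (a : ℕ) (u : Tm) : Fm → Fm
  | .atom p ts => .atom p (sfvTs a u ts)
  | .and A B => .and (sfvF a u A) (sfvF a u B)
  | .or A B => .or (sfvF a u A) (sfvF a u B)
  | .imp A B => .imp (sfvF a u A) (sfvF a u B)
  | .not A => .not (sfvF a u A)
  | .all A => .all (sfvF a (liftT 0 u) A)
  | .ex A => .ex (sfvF a (liftT 0 u) A)
end

/-! abstraction of a free variable into a bound variable (for universal closure) -/
mutual
def abT (a k : ℕ) : Tm → Tm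
  | .bvar n => .bvar n
  | .fvar b => if b = a then .bvar k else .fvar b
  | .func f ts => .func f (abTs a k ts)
  | .eps A => .eps (abF a (k+1) A)
def abTs (a k : ℕ) : Tms → Tms
  | .nil => .nil
  | .cons t ts => .cons (abT a k t) (abTs a k ts)
def abF (a k : ℕ) : Fm → Fm
  | .atom p ts => .atom p (abTs a k ts)
  | .and A B => .and (abF a k A) (abF a k B)
  | .or A B => .or (abF a k A) (abF a k B)
  | .imp A B => .imp (abF a k A) (abF a k B)
  | .not A => .not (abF a k A)
  | .all A => .all (abF a (k+1) A)
  | .ex A => .ex (abF a (k+1) A)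
end

/-! free variables -/
mutual
def fvT : Tm → List ℕ
  | .bvar _ => []
  | .fvar a => [a]
  | .func _ ts => fvTs ts
  | .eps A => fvF A
def fvTs : Tms → List ℕ
  | .nil => []
  | .cons t ts => fvT t ++ fvTs ts
def fvF : Fm → List ℕ
  | .atom _ ts => fvTs ts
  | .and A B => fvF A ++ fvF B
  | .or A B => fvF A ++ fvF B
  | .imp A B => fvF A ++ fvF B
  | .not A => fvF A
  | .all A => fvF A
  | .ex A => fvF A
end

/-! function symbols occurring in an expression -/
mutual
def fsT : Tm → List ℕ
  | .bvar _ => []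
  | .fvar _ => []
  | .func f ts => f :: fsTs ts
  | .eps A => fsF A
def fsTs : Tms → List ℕ
  | .nil => []
  | .cons t ts => fsT t ++ fsTs ts
def fsF : Fm → List ℕ
  | .atom _ ts => fsTs ts
  | .and A B => fsF A ++ fsF B
  | .or A B => fsF A ++ fsF B
  | .imp A B => fsF A ++ fsF B
  | .not A => fsF A
  | .all A => fsF A
  | .ex A => fsF A
end

/-! number of symbols (size) -/
mutual
def szT : Tm → ℕ
  | .bvar _ => 1
  | .fvar _ => 1
  | .func _ ts => 1 + szTs ts
  | .eps A => 1 + szF A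
def szTs : Tms → ℕ
  | .nil => 0
  | .cons t ts => szT t + szTs ts
def szF : Fm → ℕ
  | .atom _ ts => 1 + szTs ts
  | .and A B => 1 + szF A + szF B
  | .or A B => 1 + szF A + szF B
  | .imp A B => 1 + szF A + szF B
  | .not A => 1 + szF A
  | .all A => 1 + szF A
  | .ex A => 1 + szF A
end

/-! epsilon-freeness (first-order language) and quantifier-freeness (epsilon language) -/
mutual
def noEpsT : Tm → Bool
  | .bvar _ => true
  | .fvar _ => true
  | .func _ ts => noEpsTs ts
  | .eps _ => false
def noEpsTs : Tms → Bool
  | .nil => true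
  | .cons t ts => noEpsT t && noEpsTs ts
def noEpsF : Fm → Bool
  | .atom _ ts => noEpsTs ts
  | .and A B => noEpsF A && noEpsF B
  | .or A B => noEpsF A && noEpsF B
  | .imp A B => noEpsF A && noEpsF B
  | .not A => noEpsF A
  | .all A => noEpsF A
  | .ex A => noEpsF A
end

/-- `A` is a formula of the first-order language: it contains no epsilon terms. -/
def isFO (A : Fm) : Bool := noEpsF A

/-- quantifier-freeness: `A` belongs to the language of the epsilon calculus
(propositional language over epsilon terms) iff `qfree A`. -/
def qfree : Fm → Bool
  | .atom _ _ => true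
  | .and A B => qfree A && qfree B
  | .or A B => qfree A && qfree B
  | .imp A B => qfree A && qfree B
  | .not A => qfree A
  | .all _ => false
  | .ex _ => false

/-- The epsilon translation [A]^ε of a formula. -/
def epsT : Fm → Fm
  | .atom p ts => .atom p ts
  | .and A B => .and (epsT A) (epsT B)
  | .or A B => .or (epsT A) (epsT B)
  | .imp A B => .imp (epsT A) (epsT B)
  | .not A => .not (epsT A)
  | .ex A => inst0 (epsT A) (.eps (epsT A))
  | .all A => inst0 (epsT A) (.eps (.not (epsT A)))

/-! ## The matrix A^M of a formula: delete all quantifiers and replace the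
variables bound by them by fresh free variables. -/
mutual
def mxT (b d : ℕ) : Tm → Tm
  | .bvar n => if n < d then .fvar (b + (d - 1 - n)) else .bvar (n - d)
  | .fvar a => .fvar a
  | .func f ts => .func f (mxTs b d ts)
  | .eps A => .eps A          -- (the matrix is only used on epsilon-free formulas)
def mxTs (b d : ℕ) : Tms → Tms
  | .nil => .nil
  | .cons t ts => .cons (mxT b d t) (mxTs b d ts)
def mxF (b d : ℕ) : Fm → Fm
  | .atom p ts => .atom p (mxTs b d ts)
  | .and A B => .and (mxF b d A) (mxF b d B)
  | .or A B => .or (mxF b d A) (mxF b d B)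
  | .imp A B => .imp (mxF b d A) (mxF b d B)
  | .not A => .not (mxF b d A)
  | .all A => mxF b (d+1) A
  | .ex A => mxF b (d+1) A
end

def maxFv (A : Fm) : ℕ := (fvF A).foldr max 0

/-- the matrix A^M of A -/
def matrix (A : Fm) : Fm := mxF (maxFv A + 1) 0 A

/-- universal closure ∀x̄ A over all free variables of A -/
def uclose (A : Fm) : Fm :=
  ((fvF A).dedup).foldr (fun a B => Fm.all (abF a 0 B)) A

/-! ## Weak/strong quantifier occurrences.
`posW A` : all quantifier occurrences of `A` are weak when `A` occurs in the
succedent; `negW A` : likewise for the antecedent. -/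
mutual
def posW : Fm → Bool
  | .atom _ _ => true
  | .and A B => posW A && posW B
  | .or A B => posW A && posW B
  | .imp A B => negW A && posW B
  | .not A => negW A
  | .all _ => false
  | .ex A => posW A
def negW : Fm → Bool
  | .atom _ _ => true
  | .and A B => negW A && negW B
  | .or A B => negW A && negW B
  | .imp A B => posW A && negW B
  | .not A => posW A
  | .all A => negW A
  | .ex _ => false
end

/-- the sequent Γ ⊢ Δ contains weak quantifier occurrences only -/
def WeakSeq (Γ Δ : List Fm) : Prop :=
  (∀ A ∈ Γ, negW A = true) ∧ (∀ A ∈ Δ, posW A = true)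

/-- the sequent Γ ⊢ Δ is in the first-order language -/
def FOSeq (Γ Δ : List Fm) : Prop :=
  (∀ A ∈ Γ, isFO A = true) ∧ (∀ A ∈ Δ, isFO A = true)

/-- the sequent Γ ⊢ Δ is in the language of the epsilon calculus -/
def EpsSeq (Γ Δ : List Fm) : Prop :=
  (∀ A ∈ Γ, qfree A = true) ∧ (∀ A ∈ Δ, qfree A = true)

def fvSeq (Γ Δ : List Fm) : List ℕ :=
  (Γ ++ Δ).foldr (fun A l => fvF A ++ l) []

def fsSeq (Γ Δ : List Fm) : List ℕ :=
  (Γ ++ Δ).foldr (fun A l => fsF A ++ l) []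

def seqSize (Γ Δ : List Fm) : ℕ :=
  (Γ ++ Δ).foldr (fun A n => szF A + n) 0


/-! ## LK derivation trees.
`Deriv Γ Δ` are derivation trees of the sequent Γ ⊢ Δ built from the rules of
Gentzen's LK, where the strong quantifier rules `allR`/`exL` carry an
eigenvariable but *no* correctness condition; the various eigenvariable
disciplines (LK, LK⁺, LK⁺⁺) are imposed as predicates on the trees below. -/
inductive Deriv : List Fm → List Fm → Type where
  | ax (A : Fm) : Deriv [A] [A]
  | andL (A B : Fm) (Γ Δ : List Fm) :
      Deriv (A :: B :: Γ) Δ → Deriv (Fm.and A B :: Γ) Δ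
  | andR (A B : Fm) (Γ₁ Δ₁ Γ₂ Δ₂ : List Fm) :
      Deriv Γ₁ (A :: Δ₁) → Deriv Γ₂ (B :: Δ₂) →
      Deriv (Γ₁ ++ Γ₂) (Fm.and A B :: (Δ₁ ++ Δ₂))
  | orL (A B : Fm) (Γ₁ Δ₁ Γ₂ Δ₂ : List Fm) :
      Deriv (A :: Γ₁) Δ₁ → Deriv (B :: Γ₂) Δ₂ →
      Deriv (Fm.or A B :: (Γ₁ ++ Γ₂)) (Δ₁ ++ Δ₂)
  | orR (A B : Fm) (Γ Δ : List Fm) :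
      Deriv Γ (A :: B :: Δ) → Deriv Γ (Fm.or A B :: Δ)
  | impL (A B : Fm) (Γ₁ Δ₁ Γ₂ Δ₂ : List Fm) :
      Deriv Γ₁ (A :: Δ₁) → Deriv (B :: Γ₂) Δ₂ →
      Deriv (Fm.imp A B :: (Γ₁ ++ Γ₂)) (Δ₁ ++ Δ₂)
  | impR (A B : Fm) (Γ Δ : List Fm) :
      Deriv (A :: Γ) (B :: Δ) → Deriv Γ (Fm.imp A B :: Δ)
  | notL (A : Fm) (Γ Δ : List Fm) :
      Deriv Γ (A :: Δ) → Deriv (Fm.not A :: Γ) Δ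
  | notR (A : Fm) (Γ Δ : List Fm) :
      Deriv (A :: Γ) Δ → Deriv Γ (Fm.not A :: Δ)
  | wL (A : Fm) (Γ Δ : List Fm) : Deriv Γ Δ → Deriv (A :: Γ) Δ
  | wR (A : Fm) (Γ Δ : List Fm) : Deriv Γ Δ → Deriv Γ (A :: Δ)
  | cL (A : Fm) (Γ Δ : List Fm) : Deriv (A :: A :: Γ) Δ → Deriv (A :: Γ) Δ
  | cR (A : Fm) (Γ Δ : List Fm) : Deriv Γ (A :: A :: Δ) → Deriv Γ (A :: Δ)
  | cut (A : Fm) (Γ₁ Δ₁ Γ₂ Δ₂ : List Fm) :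
      Deriv Γ₁ (A :: Δ₁) → Deriv (A :: Γ₂) Δ₂ →
      Deriv (Γ₁ ++ Γ₂) (Δ₁ ++ Δ₂)
  | allL (t : Tm) (A : Fm) (Γ Δ : List Fm) :
      Deriv (inst0 A t :: Γ) Δ → Deriv (Fm.all A :: Γ) Δ
  | allR (a : ℕ) (A : Fm) (Γ Δ : List Fm) :
      Deriv Γ (inst0 A (Tm.fvar a) :: Δ) → Deriv Γ (Fm.all A :: Δ)
  | exL (a : ℕ) (A : Fm) (Γ Δ : List Fm) :
      Deriv (inst0 A (Tm.fvar a) :: Γ) Δ → Deriv (Fm.ex A :: Γ) Δ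
  | exR (t : Tm) (A : Fm) (Γ Δ : List Fm) :
      Deriv Γ (inst0 A t :: Δ) → Deriv Γ (Fm.ex A :: Δ)
  | permL (Γ Γ' Δ : List Fm) : Γ.Perm Γ' → Deriv Γ Δ → Deriv Γ' Δ
  | permR (Γ Δ Δ' : List Fm) : Δ.Perm Δ' → Deriv Γ Δ → Deriv Γ Δ'

namespace Deriv

/-- the size of a derivation: the number of inference steps occurring in it -/
def size : ∀ {Γ Δ}, Deriv Γ Δ → ℕ
  | _, _, ax _ => 1
  | _, _, andL _ _ _ _ d => d.size + 1
  | _, _, andR _ _ _ _ _ _ d e => d.size + e.size + 1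
  | _, _, orL _ _ _ _ _ _ d e => d.size + e.size + 1
  | _, _, orR _ _ _ _ d => d.size + 1
  | _, _, impL _ _ _ _ _ _ d e => d.size + e.size + 1
  | _, _, impR _ _ _ _ d => d.size + 1
  | _, _, notL _ _ _ d => d.size + 1
  | _, _, notR _ _ _ d => d.size + 1
  | _, _, wL _ _ _ d => d.size + 1
  | _, _, wR _ _ _ d => d.size + 1
  | _, _, cL _ _ _ d => d.size + 1
  | _, _, cR _ _ _ d => d.size + 1
  | _, _, cut _ _ _ _ _ d e => d.size + e.size + 1
  | _, _, allL _ _ _ _ d => d.size + 1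
  | _, _, allR _ _ _ _ d => d.size + 1
  | _, _, exL _ _ _ _ d => d.size + 1
  | _, _, exR _ _ _ _ d => d.size + 1
  | _, _, permL _ _ _ _ d => d.size + 1
  | _, _, permR _ _ _ _ d => d.size + 1

/-- the list of cut formulas occurring in a derivation -/
def cutFms : ∀ {Γ Δ}, Deriv Γ Δ → List Fm
  | _, _, ax _ => []
  | _, _, andL _ _ _ _ d => d.cutFms
  | _, _, andR _ _ _ _ _ _ d e => d.cutFms ++ e.cutFms
  | _, _, orL _ _ _ _ _ _ d e => d.cutFms ++ e.cutFms
  | _, _, orR _ _ _ _ d => d.cutFms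
  | _, _, impL _ _ _ _ _ _ d e => d.cutFms ++ e.cutFms
  | _, _, impR _ _ _ _ d => d.cutFms
  | _, _, notL _ _ _ d => d.cutFms
  | _, _, notR _ _ _ d => d.cutFms
  | _, _, wL _ _ _ d => d.cutFms
  | _, _, wR _ _ _ d => d.cutFms
  | _, _, cL _ _ _ d => d.cutFms
  | _, _, cR _ _ _ d => d.cutFms
  | _, _, cut A _ _ _ _ d e => A :: (d.cutFms ++ e.cutFms)
  | _, _, allL _ _ _ _ d => d.cutFms
  | _, _, allR _ _ _ _ d => d.cutFms
  | _, _, exL _ _ _ _ d => d.cutFms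
  | _, _, exR _ _ _ _ d => d.cutFms
  | _, _, permL _ _ _ _ d => d.cutFms
  | _, _, permR _ _ _ _ d => d.cutFms

/-- data of the strong quantifier inferences of a derivation:
(eigenvariable, auxiliary formula, main formula) -/
def strongs : ∀ {Γ Δ}, Deriv Γ Δ → List (ℕ × Fm × Fm)
  | _, _, ax _ => []
  | _, _, andL _ _ _ _ d => d.strongs
  | _, _, andR _ _ _ _ _ _ d e => d.strongs ++ e.strongs
  | _, _, orL _ _ _ _ _ _ d e => d.strongs ++ e.strongs
  | _, _, orR _ _ _ _ d => d.strongs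
  | _, _, impL _ _ _ _ _ _ d e => d.strongs ++ e.strongs
  | _, _, impR _ _ _ _ d => d.strongs
  | _, _, notL _ _ _ d => d.strongs
  | _, _, notR _ _ _ d => d.strongs
  | _, _, wL _ _ _ d => d.strongs
  | _, _, wR _ _ _ d => d.strongs
  | _, _, cL _ _ _ d => d.strongs
  | _, _, cR _ _ _ d => d.strongs
  | _, _, cut _ _ _ _ _ d e => d.strongs ++ e.strongs
  | _, _, allL _ _ _ _ d => d.strongs
  | _, _, allR a A _ _ d => (a, inst0 A (Tm.fvar a), Fm.all A) :: d.strongs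
  | _, _, exL a A _ _ d => (a, inst0 A (Tm.fvar a), Fm.ex A) :: d.strongs
  | _, _, exR _ _ _ _ d => d.strongs
  | _, _, permL _ _ _ _ d => d.strongs
  | _, _, permR _ _ _ _ d => d.strongs

/-- the standard (local) eigenvariable conditions of LK: the eigenvariable of a
strong quantifier inference does not occur free in its conclusion -/
def Std : ∀ {Γ Δ}, Deriv Γ Δ → Prop
  | _, _, ax _ => True
  | _, _, andL _ _ _ _ d => d.Std
  | _, _, andR _ _ _ _ _ _ d e => d.Std ∧ e.Std
  | _, _, orL _ _ _ _ _ _ d e => d.Std ∧ e.Std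
  | _, _, orR _ _ _ _ d => d.Std
  | _, _, impL _ _ _ _ _ _ d e => d.Std ∧ e.Std
  | _, _, impR _ _ _ _ d => d.Std
  | _, _, notL _ _ _ d => d.Std
  | _, _, notR _ _ _ d => d.Std
  | _, _, wL _ _ _ d => d.Std
  | _, _, wR _ _ _ d => d.Std
  | _, _, cL _ _ _ d => d.Std
  | _, _, cR _ _ _ d => d.Std
  | _, _, cut _ _ _ _ _ d e => d.Std ∧ e.Std
  | _, _, allL _ _ _ _ d => d.Std
  | _, _, allR a A Γ Δ d => a ∉ fvSeq Γ (Fm.all A :: Δ) ∧ d.Std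
  | _, _, exL a A Γ Δ d => a ∉ fvSeq (Fm.ex A :: Γ) Δ ∧ d.Std
  | _, _, exR _ _ _ _ d => d.Std
  | _, _, permL _ _ _ _ d => d.Std
  | _, _, permR _ _ _ _ d => d.Std

end Deriv

/-- the side variable relation `<_φ`: `b` is a side variable of `a` in `φ` if `φ`
contains a strong quantifier inference with eigenvariable `a` whose auxiliary
formula contains the free variable `b` -/
def sideRel {Γ Δ} (d : Deriv Γ Δ) (a b : ℕ) : Prop :=
  ∃ e ∈ d.strongs, e.1 = a ∧ b ∈ fvF e.2.1 ∧ b ≠ a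

/-- acyclicity of a binary relation -/
def Acyc (r : ℕ → ℕ → Prop) : Prop := ∀ x, ¬ Relation.TransGen r x x

/-- LK⁺-suitability of (all strong quantifier inferences of) a derivation:
substitutability, the side variable condition, and weak regularity. -/
def SuitP {Γ Δ} (d : Deriv Γ Δ) : Prop :=
  (∀ e ∈ d.strongs, e.1 ∉ fvSeq Γ Δ) ∧
  Acyc (sideRel d) ∧
  (d.strongs.map (·.1)).Nodup

/-- LK⁺⁺-suitability: substitutability, the side variable condition, and very
weak regularity (equal eigenvariables only for equal main formulas). -/
def SuitPP {Γ Δ} (d : Deriv Γ Δ) : Prop :=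
  (∀ e ∈ d.strongs, e.1 ∉ fvSeq Γ Δ) ∧
  Acyc (sideRel d) ∧
  (∀ e₁ ∈ d.strongs, ∀ e₂ ∈ d.strongs, e₁.1 = e₂.1 → e₁.2.2 = e₂.2.2)

/-! ## The sequent calculus Lε of the epsilon calculus:
atomic axioms, the propositional, structural and cut rules of LK, the weak
quantifier rules ∃_r and ∀_l producing epsilon terms, and a substitution rule
replacing the strong quantifier inferences. -/
inductive EDeriv : List Fm → List Fm → Type where
  | ax (p : ℕ) (ts : Tms) : EDeriv [Fm.atom p ts] [Fm.atom p ts]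
  | andL (A B : Fm) (Γ Δ : List Fm) :
      EDeriv (A :: B :: Γ) Δ → EDeriv (Fm.and A B :: Γ) Δ
  | andR (A B : Fm) (Γ₁ Δ₁ Γ₂ Δ₂ : List Fm) :
      EDeriv Γ₁ (A :: Δ₁) → EDeriv Γ₂ (B :: Δ₂) →
      EDeriv (Γ₁ ++ Γ₂) (Fm.and A B :: (Δ₁ ++ Δ₂))
  | orL (A B : Fm) (Γ₁ Δ₁ Γ₂ Δ₂ : List Fm) :
      EDeriv (A :: Γ₁) Δ₁ → EDeriv (B :: Γ₂) Δ₂ →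
      EDeriv (Fm.or A B :: (Γ₁ ++ Γ₂)) (Δ₁ ++ Δ₂)
  | orR (A B : Fm) (Γ Δ : List Fm) :
      EDeriv Γ (A :: B :: Δ) → EDeriv Γ (Fm.or A B :: Δ)
  | impL (A B : Fm) (Γ₁ Δ₁ Γ₂ Δ₂ : List Fm) :
      EDeriv Γ₁ (A :: Δ₁) → EDeriv (B :: Γ₂) Δ₂ →
      EDeriv (Fm.imp A B :: (Γ₁ ++ Γ₂)) (Δ₁ ++ Δ₂)
  | impR (A B : Fm) (Γ Δ : List Fm) :
      EDeriv (A :: Γ) (B :: Δ) → EDeriv Γ (Fm.imp A B :: Δ)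
  | notL (A : Fm) (Γ Δ : List Fm) :
      EDeriv Γ (A :: Δ) → EDeriv (Fm.not A :: Γ) Δ
  | notR (A : Fm) (Γ Δ : List Fm) :
      EDeriv (A :: Γ) Δ → EDeriv Γ (Fm.not A :: Δ)
  | wL (A : Fm) (Γ Δ : List Fm) : EDeriv Γ Δ → EDeriv (A :: Γ) Δ
  | wR (A : Fm) (Γ Δ : List Fm) : EDeriv Γ Δ → EDeriv Γ (A :: Δ)
  | cL (A : Fm) (Γ Δ : List Fm) : EDeriv (A :: A :: Γ) Δ → EDeriv (A :: Γ) Δ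
  | cR (A : Fm) (Γ Δ : List Fm) : EDeriv Γ (A :: A :: Δ) → EDeriv Γ (A :: Δ)
  | cut (A : Fm) (Γ₁ Δ₁ Γ₂ Δ₂ : List Fm) :
      EDeriv Γ₁ (A :: Δ₁) → EDeriv (A :: Γ₂) Δ₂ →
      EDeriv (Γ₁ ++ Γ₂) (Δ₁ ++ Δ₂)
  | allL (t : Tm) (A : Fm) (Γ Δ : List Fm) :
      EDeriv (inst0 A t :: Γ) Δ →
      EDeriv (inst0 A (Tm.eps (Fm.not A)) :: Γ) Δ
  | exR (t : Tm) (A : Fm) (Γ Δ : List Fm) :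
      EDeriv Γ (inst0 A t :: Δ) →
      EDeriv Γ (inst0 A (Tm.eps A) :: Δ)
  | subst (a : ℕ) (t : Tm) (Γ Δ : List Fm) :
      EDeriv Γ Δ → EDeriv (Γ.map (sfvF a t)) (Δ.map (sfvF a t))
  | permL (Γ Γ' Δ : List Fm) : Γ.Perm Γ' → EDeriv Γ Δ → EDeriv Γ' Δ
  | permR (Γ Δ Δ' : List Fm) : Δ.Perm Δ' → EDeriv Γ Δ → EDeriv Γ Δ'

namespace EDeriv

/-- the size of an Lε derivation -/
def size : ∀ {Γ Δ}, EDeriv Γ Δ → ℕ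
  | _, _, ax _ _ => 1
  | _, _, andL _ _ _ _ d => d.size + 1
  | _, _, andR _ _ _ _ _ _ d e => d.size + e.size + 1
  | _, _, orL _ _ _ _ _ _ d e => d.size + e.size + 1
  | _, _, orR _ _ _ _ d => d.size + 1
  | _, _, impL _ _ _ _ _ _ d e => d.size + e.size + 1
  | _, _, impR _ _ _ _ d => d.size + 1
  | _, _, notL _ _ _ d => d.size + 1
  | _, _, notR _ _ _ d => d.size + 1
  | _, _, wL _ _ _ d => d.size + 1
  | _, _, wR _ _ _ d => d.size + 1
  | _, _, cL _ _ _ d => d.size + 1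
  | _, _, cR _ _ _ d => d.size + 1
  | _, _, cut _ _ _ _ _ d e => d.size + e.size + 1
  | _, _, allL _ _ _ _ d => d.size + 1
  | _, _, exR _ _ _ _ d => d.size + 1
  | _, _, subst _ _ _ _ d => d.size + 1
  | _, _, permL _ _ _ _ d => d.size + 1
  | _, _, permR _ _ _ _ d => d.size + 1

/-- the list of cut formulas occurring in an Lε derivation -/
def cutFms : ∀ {Γ Δ}, EDeriv Γ Δ → List Fm
  | _, _, ax _ _ => []
  | _, _, andL _ _ _ _ d => d.cutFms
  | _, _, andR _ _ _ _ _ _ d e => d.cutFms ++ e.cutFms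
  | _, _, orL _ _ _ _ _ _ d e => d.cutFms ++ e.cutFms
  | _, _, orR _ _ _ _ d => d.cutFms
  | _, _, impL _ _ _ _ _ _ d e => d.cutFms ++ e.cutFms
  | _, _, impR _ _ _ _ d => d.cutFms
  | _, _, notL _ _ _ d => d.cutFms
  | _, _, notR _ _ _ d => d.cutFms
  | _, _, wL _ _ _ d => d.cutFms
  | _, _, wR _ _ _ d => d.cutFms
  | _, _, cL _ _ _ d => d.cutFms
  | _, _, cR _ _ _ d => d.cutFms
  | _, _, cut A _ _ _ _ d e => A :: (d.cutFms ++ e.cutFms)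
  | _, _, allL _ _ _ _ d => d.cutFms
  | _, _, exR _ _ _ _ d => d.cutFms
  | _, _, subst _ _ _ _ d => d.cutFms
  | _, _, permL _ _ _ _ d => d.cutFms
  | _, _, permR _ _ _ _ d => d.cutFms

end EDeriv

/-! ## Elementary functions and polynomial bounds -/

/-- `iterExp k n` is the `k`-fold iterated exponential 2^2^...^n. -/
def iterExp : ℕ → ℕ → ℕ
  | 0, n => n
  | k+1, n => 2 ^ iterExp k n

/-- A function ℕ → ℕ is elementary (in the sense of Kalmár: definable by a
quantifier-free formula from +, ×, and x ↦ 2^x) iff it is majorized by some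
fixed iterated exponential; we use this growth-rate characterization. -/
def IsElementary (f : ℕ → ℕ) : Prop := ∃ k, ∀ n, f n ≤ iterExp k n

/-- `g` is polynomially bounded -/
def PolyBdd (g : ℕ → ℕ) : Prop := ∃ p : Polynomial ℕ, ∀ n, g n ≤ p.eval n

/-! ## Skolemization (relationally): `SkP F A B` (`SkN F A B`) holds if `B` is
obtained from `A`, occurring in the succedent (antecedent), by replacing the
strong quantifiers by terms built from fresh function symbols in `F`. -/
mutual
inductive SkP (F : ℕ → Prop) : Fm → Fm → Prop where
  | atom (p ts) : SkP F (Fm.atom p ts) (Fm.atom p ts)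
  | and {A A' B B'} : SkP F A A' → SkP F B B' → SkP F (Fm.and A B) (Fm.and A' B')
  | or {A A' B B'} : SkP F A A' → SkP F B B' → SkP F (Fm.or A B) (Fm.or A' B')
  | imp {A A' B B'} : SkN F A A' → SkP F B B' → SkP F (Fm.imp A B) (Fm.imp A' B')
  | not {A A'} : SkN F A A' → SkP F (Fm.not A) (Fm.not A')
  | ex {A A'} : SkP F A A' → SkP F (Fm.ex A) (Fm.ex A')
  | all {A B} (f : ℕ) (ts : Tms) : F f →
      SkP F (inst0 A (Tm.func f ts)) B → SkP F (Fm.all A) B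
inductive SkN (F : ℕ → Prop) : Fm → Fm → Prop where
  | atom (p ts) : SkN F (Fm.atom p ts) (Fm.atom p ts)
  | and {A A' B B'} : SkN F A A' → SkN F B B' → SkN F (Fm.and A B) (Fm.and A' B')
  | or {A A' B B'} : SkN F A A' → SkN F B B' → SkN F (Fm.or A B) (Fm.or A' B')
  | imp {A A' B B'} : SkP F A A' → SkN F B B' → SkN F (Fm.imp A B) (Fm.imp A' B')
  | not {A A'} : SkP F A A' → SkN F (Fm.not A) (Fm.not A')
  | all {A A'} : SkN F A A' → SkN F (Fm.all A) (Fm.all A')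
  | ex {A B} (f : ℕ) (ts : Tms) : F f →
      SkN F (inst0 A (Tm.func f ts)) B → SkN F (Fm.ex A) B
end

/-- `S'` is a Skolemization of the sequent `S` using fresh function symbols from `F` -/
def SkolemSeq (F : ℕ → Prop) (S S' : List Fm × List Fm) : Prop :=
  List.Forall₂ (SkN F) S.1 S'.1 ∧ List.Forall₂ (SkP F) S.2 S'.2



/-! ## Auxiliary material for the proof -/

/-- number of connectives -/
def cx : Fm → ℕ
  | .atom _ _ => 0
  | .and A B => cx A + cx B + 1
  | .or A B => cx A + cx B + 1
  | .imp A B => cx A + cx B + 1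
  | .not A => cx A + 1
  | .all A => cx A + 1
  | .ex A => cx A + 1

theorem cx_sub : ∀ (A : Fm) (k : ℕ) (u : Tm), cx (subF k u A) = cx A
  | .atom _ _, _, _ => rfl
  | .and A B, k, u => by simp [subF, cx, cx_sub A, cx_sub B]
  | .or A B, k, u => by simp [subF, cx, cx_sub A, cx_sub B]
  | .imp A B, k, u => by simp [subF, cx, cx_sub A, cx_sub B]
  | .not A, k, u => by simp [subF, cx, cx_sub A]
  | .all A, k, u => by simp [subF, cx, cx_sub A]
  | .ex A, k, u => by simp [subF, cx, cx_sub A]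

theorem weak_sub : ∀ (A : Fm) (k : ℕ) (u : Tm),
    posW (subF k u A) = posW A ∧ negW (subF k u A) = negW A
  | .atom _ _, _, _ => by simp [subF, posW, negW]
  | .and A B, k, u => by simp [subF, posW, negW, weak_sub A, weak_sub B]
  | .or A B, k, u => by simp [subF, posW, negW, weak_sub A, weak_sub B]
  | .imp A B, k, u => by simp [subF, posW, negW, weak_sub A, weak_sub B]
  | .not A, k, u => by simp [subF, posW, negW, weak_sub A]
  | .all A, k, u => by simp [subF, posW, negW, weak_sub A]
  | .ex A, k, u => by simp [subF, posW, negW, weak_sub A]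

mutual
theorem sub_liftT : ∀ (t : Tm) (k : ℕ) (u : Tm), subT k u (liftT k t) = t
  | .bvar n, k, u => by
      by_cases h : n < k
      · have h' : n ≠ k := by omega
        simp [liftT, subT, h, h']
      · have h1 : n + 1 ≠ k := by omega
        have h2 : ¬ n + 1 < k := by omega
        simp [liftT, subT, h, h1, h2]
  | .fvar a, k, u => by simp [liftT, subT]
  | .func f ts, k, u => by simp [liftT, subT, sub_liftTs ts]
  | .eps A, k, u => by simp [liftT, subT, sub_liftF A]
theorem sub_liftTs : ∀ (t : Tms) (k : ℕ) (u : Tm), subTs k u (liftTs k t) = t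
  | .nil, k, u => by simp [liftTs, subTs]
  | .cons t ts, k, u => by simp [liftTs, subTs, sub_liftTs ts, sub_liftT t]
theorem sub_liftF : ∀ (t : Fm) (k : ℕ) (u : Tm), subF k u (liftF k t) = t
  | .atom _ ts, k, u => by simp [liftF, subF, sub_liftTs ts]
  | .and A B, k, u => by simp [liftF, subF, sub_liftF A, sub_liftF B]
  | .or A B, k, u => by simp [liftF, subF, sub_liftF A, sub_liftF B]
  | .imp A B, k, u => by simp [liftF, subF, sub_liftF A, sub_liftF B]
  | .not A, k, u => by simp [liftF, subF, sub_liftF A]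
  | .all A, k, u => by simp [liftF, subF, sub_liftF A]
  | .ex A, k, u => by simp [liftF, subF, sub_liftF A]
end

/-- Truth of a formula where quantifiers range over the instances listed in `T`. -/
def holds (v : ℕ → Tms → Prop) (T : List (Fm × Tm)) : Fm → Prop
  | .atom p ts => v p ts
  | .and A B => holds v T A ∧ holds v T B
  | .or A B => holds v T A ∨ holds v T B
  | .imp A B => holds v T A → holds v T B
  | .not A => ¬ holds v T A
  | .all A => ∀ t, (A, t) ∈ T → holds v T (inst0 A t)
  | .ex A => ∃ t, (A, t) ∈ T ∧ holds v T (inst0 A t)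
termination_by A => cx A
decreasing_by all_goals simp [cx, inst0, cx_sub]; try omega

def Sat (v : ℕ → Tms → Prop) (T : List (Fm × Tm)) (Γ Δ : List Fm) : Prop :=
  (∀ A ∈ Γ, holds v T A) → ∃ A ∈ Δ, holds v T A

theorem any_cons (p : Fm → Prop) (a : Fm) (l : List Fm) :
    (∃ A ∈ a :: l, p A) ↔ (p a ∨ ∃ A ∈ l, p A) := by simp

theorem any_append (p : Fm → Prop) (l l' : List Fm) :
    (∃ A ∈ l ++ l', p A) ↔ ((∃ A ∈ l, p A) ∨ ∃ A ∈ l', p A) := by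
  simp [or_and_right, exists_or]

set_option maxHeartbeats 2000000 in
/-- Herbrand-style soundness of cut-free proofs of weak sequents. -/
theorem herbrand {Γ Δ : List Fm} (d : Deriv Γ Δ) (hw : WeakSeq Γ Δ) (hc : d.cutFms = []) :
    ∃ T : List (Fm × Tm), T.length ≤ d.size ∧
      ∀ T', T ⊆ T' → ∀ v, Sat v T' Γ Δ := by
  induction d with
  | ax A => exact ⟨[], by simp, fun T' _ v h => ⟨A, by simp, h A (by simp)⟩⟩
  | andL A B Γ Δ d ih =>
    obtain ⟨T, h1, h2⟩ := ih (by
      simp only [WeakSeq, List.forall_mem_cons, List.forall_mem_append, negW, posW, inst0,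
        weak_sub, Bool.and_eq_true] at hw ⊢
      tauto) (by simpa [Deriv.cutFms] using hc)
    refine ⟨T, by simp only [Deriv.size]; omega, fun T' hT v => ?_⟩
    have := h2 T' hT v
    simp only [Sat, List.forall_mem_cons, holds] at this ⊢
    tauto
  | andR A B Γ₁ Δ₁ Γ₂ Δ₂ d e ih1 ih2 =>
    simp only [Deriv.cutFms, List.append_eq_nil_iff] at hc
    obtain ⟨T1, h1, h2⟩ := ih1 (by
      simp only [WeakSeq, List.forall_mem_cons, List.forall_mem_append, negW, posW, inst0,
        weak_sub, Bool.and_eq_true] at hw ⊢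
      tauto) hc.1
    obtain ⟨T2, h3, h4⟩ := ih2 (by
      simp only [WeakSeq, List.forall_mem_cons, List.forall_mem_append, negW, posW, inst0,
        weak_sub, Bool.and_eq_true] at hw ⊢
      tauto) hc.2
    refine ⟨T1 ++ T2, by simp only [Deriv.size, List.length_append]; omega, fun T' hT v => ?_⟩
    have a1 := h2 T' (by intro x hx; exact hT (by simp [hx])) v
    have a2 := h4 T' (by intro x hx; exact hT (by simp [hx])) v
    simp only [Sat, any_cons, List.forall_mem_append, any_append,
      holds] at a1 a2 ⊢
    rintro ⟨g1, g2⟩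
    rcases a1 g1 with a1 | a1
    · rcases a2 g2 with a2 | a2
      · exact Or.inl ⟨a1, a2⟩
      · exact Or.inr (Or.inr a2)
    · exact Or.inr (Or.inl a1)
  | orL A B Γ₁ Δ₁ Γ₂ Δ₂ d e ih1 ih2 =>
    simp only [Deriv.cutFms, List.append_eq_nil_iff] at hc
    obtain ⟨T1, h1, h2⟩ := ih1 (by
      simp only [WeakSeq, List.forall_mem_cons, List.forall_mem_append, negW, posW, inst0,
        weak_sub, Bool.and_eq_true] at hw ⊢
      tauto) hc.1
    obtain ⟨T2, h3, h4⟩ := ih2 (by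
      simp only [WeakSeq, List.forall_mem_cons, List.forall_mem_append, negW, posW, inst0,
        weak_sub, Bool.and_eq_true] at hw ⊢
      tauto) hc.2
    refine ⟨T1 ++ T2, by simp only [Deriv.size, List.length_append]; omega, fun T' hT v => ?_⟩
    have a1 := h2 T' (by intro x hx; exact hT (by simp [hx])) v
    have a2 := h4 T' (by intro x hx; exact hT (by simp [hx])) v
    simp only [Sat, List.forall_mem_cons, List.forall_mem_append, any_append,
      holds] at a1 a2 ⊢
    rintro ⟨g | g, g1, g2⟩
    · exact Or.inl (a1 ⟨g, g1⟩)
    · exact Or.inr (a2 ⟨g, g2⟩)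
  | orR A B Γ Δ d ih =>
    obtain ⟨T, h1, h2⟩ := ih (by
      simp only [WeakSeq, List.forall_mem_cons, List.forall_mem_append, negW, posW, inst0,
        weak_sub, Bool.and_eq_true] at hw ⊢
      tauto) (by simpa [Deriv.cutFms] using hc)
    refine ⟨T, by simp only [Deriv.size]; omega, fun T' hT v => ?_⟩
    have := h2 T' hT v
    simp only [Sat, any_cons, holds] at this ⊢
    tauto
  | impL A B Γ₁ Δ₁ Γ₂ Δ₂ d e ih1 ih2 =>
    simp only [Deriv.cutFms, List.append_eq_nil_iff] at hc
    obtain ⟨T1, h1, h2⟩ := ih1 (by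
      simp only [WeakSeq, List.forall_mem_cons, List.forall_mem_append, negW, posW, inst0,
        weak_sub, Bool.and_eq_true] at hw ⊢
      tauto) hc.1
    obtain ⟨T2, h3, h4⟩ := ih2 (by
      simp only [WeakSeq, List.forall_mem_cons, List.forall_mem_append, negW, posW, inst0,
        weak_sub, Bool.and_eq_true] at hw ⊢
      tauto) hc.2
    refine ⟨T1 ++ T2, by simp only [Deriv.size, List.length_append]; omega, fun T' hT v => ?_⟩
    have a1 := h2 T' (by intro x hx; exact hT (by simp [hx])) v
    have a2 := h4 T' (by intro x hx; exact hT (by simp [hx])) v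
    simp only [Sat, List.forall_mem_cons, List.forall_mem_append, any_append,
      any_cons, holds] at a1 a2 ⊢
    rintro ⟨g, g1, g2⟩
    rcases a1 g1 with a1 | a1
    · exact Or.inr (a2 ⟨g a1, g2⟩)
    · exact Or.inl a1
  | impR A B Γ Δ d ih =>
    obtain ⟨T, h1, h2⟩ := ih (by
      simp only [WeakSeq, List.forall_mem_cons, List.forall_mem_append, negW, posW, inst0,
        weak_sub, Bool.and_eq_true] at hw ⊢
      tauto) (by simpa [Deriv.cutFms] using hc)
    refine ⟨T, by simp only [Deriv.size]; omega, fun T' hT v => ?_⟩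
    have := h2 T' hT v
    simp only [Sat, any_cons, List.forall_mem_cons, holds] at this ⊢
    tauto
  | notL A Γ Δ d ih =>
    obtain ⟨T, h1, h2⟩ := ih (by
      simp only [WeakSeq, List.forall_mem_cons, List.forall_mem_append, negW, posW, inst0,
        weak_sub, Bool.and_eq_true] at hw ⊢
      tauto) (by simpa [Deriv.cutFms] using hc)
    refine ⟨T, by simp only [Deriv.size]; omega, fun T' hT v => ?_⟩
    have := h2 T' hT v
    simp only [Sat, any_cons, List.forall_mem_cons, holds] at this ⊢
    tauto
  | notR A Γ Δ d ih =>
    obtain ⟨T, h1, h2⟩ := ih (by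
      simp only [WeakSeq, List.forall_mem_cons, List.forall_mem_append, negW, posW, inst0,
        weak_sub, Bool.and_eq_true] at hw ⊢
      tauto) (by simpa [Deriv.cutFms] using hc)
    refine ⟨T, by simp only [Deriv.size]; omega, fun T' hT v => ?_⟩
    have := h2 T' hT v
    simp only [Sat, any_cons, List.forall_mem_cons, holds] at this ⊢
    tauto
  | wL A Γ Δ d ih =>
    obtain ⟨T, h1, h2⟩ := ih (by
      simp only [WeakSeq, List.forall_mem_cons, List.forall_mem_append, negW, posW, inst0,
        weak_sub, Bool.and_eq_true] at hw ⊢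
      tauto) (by simpa [Deriv.cutFms] using hc)
    refine ⟨T, by simp only [Deriv.size]; omega, fun T' hT v => ?_⟩
    have := h2 T' hT v
    simp only [Sat, List.forall_mem_cons] at this ⊢
    tauto
  | wR A Γ Δ d ih =>
    obtain ⟨T, h1, h2⟩ := ih (by
      simp only [WeakSeq, List.forall_mem_cons, List.forall_mem_append, negW, posW, inst0,
        weak_sub, Bool.and_eq_true] at hw ⊢
      tauto) (by simpa [Deriv.cutFms] using hc)
    refine ⟨T, by simp only [Deriv.size]; omega, fun T' hT v => ?_⟩
    have := h2 T' hT v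
    simp only [Sat, any_cons] at this ⊢
    tauto
  | cL A Γ Δ d ih =>
    obtain ⟨T, h1, h2⟩ := ih (by
      simp only [WeakSeq, List.forall_mem_cons, List.forall_mem_append, negW, posW, inst0,
        weak_sub, Bool.and_eq_true] at hw ⊢
      tauto) (by simpa [Deriv.cutFms] using hc)
    refine ⟨T, by simp only [Deriv.size]; omega, fun T' hT v => ?_⟩
    have := h2 T' hT v
    simp only [Sat, List.forall_mem_cons] at this ⊢
    tauto
  | cR A Γ Δ d ih =>
    obtain ⟨T, h1, h2⟩ := ih (by
      simp only [WeakSeq, List.forall_mem_cons, List.forall_mem_append, negW, posW, inst0,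
        weak_sub, Bool.and_eq_true] at hw ⊢
      tauto) (by simpa [Deriv.cutFms] using hc)
    refine ⟨T, by simp only [Deriv.size]; omega, fun T' hT v => ?_⟩
    have := h2 T' hT v
    simp only [Sat, any_cons] at this ⊢
    tauto
  | cut A Γ₁ Δ₁ Γ₂ Δ₂ d e ih1 ih2 => simp [Deriv.cutFms] at hc
  | allL t A Γ Δ d ih =>
    obtain ⟨T, h1, h2⟩ := ih (by
      simp only [WeakSeq, List.forall_mem_cons, List.forall_mem_append, negW, posW, inst0,
        weak_sub, Bool.and_eq_true] at hw ⊢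
      tauto) (by simpa [Deriv.cutFms] using hc)
    refine ⟨(A, t) :: T, by simp only [Deriv.size, List.length_cons]; omega, fun T' hT v => ?_⟩
    have := h2 T' (by intro x hx; exact hT (by simp [hx])) v
    have hm : (A, t) ∈ T' := hT (by simp)
    simp only [Sat, List.forall_mem_cons, holds] at this ⊢
    intro h
    exact this ⟨h.1 t hm, h.2⟩
  | allR a A Γ Δ d ih => simp [WeakSeq, posW] at hw
  | exL a A Γ Δ d ih => simp [WeakSeq, negW] at hw
  | exR t A Γ Δ d ih =>
    obtain ⟨T, h1, h2⟩ := ih (by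
      simp only [WeakSeq, List.forall_mem_cons, List.forall_mem_append, negW, posW, inst0,
        weak_sub, Bool.and_eq_true] at hw ⊢
      tauto) (by simpa [Deriv.cutFms] using hc)
    refine ⟨(A, t) :: T, by simp only [Deriv.size, List.length_cons]; omega, fun T' hT v => ?_⟩
    have := h2 T' (by intro x hx; exact hT (by simp [hx])) v
    have hm : (A, t) ∈ T' := hT (by simp)
    simp only [Sat, any_cons, holds] at this ⊢
    intro h
    rcases this h with h | h
    · exact Or.inl ⟨t, hm, h⟩
    · exact Or.inr h
  | permL Γ Γ' Δ p d ih =>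
    obtain ⟨T, h1, h2⟩ := ih (by simpa [WeakSeq, p.mem_iff] using hw)
      (by simpa [Deriv.cutFms] using hc)
    refine ⟨T, by simp only [Deriv.size]; omega, fun T' hT v => ?_⟩
    have := h2 T' hT v
    simpa only [Sat, p.mem_iff] using this
  | permR Γ Δ Δ' p d ih =>
    obtain ⟨T, h1, h2⟩ := ih (by simpa [WeakSeq, p.mem_iff] using hw)
      (by simpa [Deriv.cutFms] using hc)
    refine ⟨T, by simp only [Deriv.size]; omega, fun T' hT v => ?_⟩
    have := h2 T' hT v
    simpa only [Sat, p.mem_iff] using this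

/-! ### The sequents -/

abbrev sT (t : Tm) : Tm := .func 0 (.cons t .nil)
abbrev Rl (y x z : Tm) : Fm := .atom 0 (.cons y (.cons x (.cons z .nil)))
abbrev cT : Tm := .fvar 0
abbrev triv : Fm := .imp (.atom 1 .nil) (.atom 1 .nil)

abbrev body1 : Fm := Rl (.bvar 0) cT (sT (.bvar 0))
/-- `∀ y, y + 2^0 = s y` -/
abbrev B1 : Fm := .all body1
abbrev body2 (y x z w : Tm) : Fm := .imp (Rl y x z) (.imp (Rl z x w) (Rl y (sT x) w))
/-- `∀ y x z w, y + 2^x = z → z + 2^x = w → y + 2^(s x) = w` -/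
abbrev B2 : Fm := .all (.all (.all (.all (body2 (.bvar 3) (.bvar 2) (.bvar 1) (.bvar 0)))))

/-- goal formulas, in the variable `bvar 0` -/
def Dg : ℕ → Fm
  | 0 => triv
  | j+1 => .ex (.and (Rl cT (.bvar 1) (.bvar 0)) (Dg j))

theorem sub_Dg : ∀ (j k : ℕ) (u : Tm), subF (k+1) u (Dg j) = Dg j
  | 0, k, u => by simp [Dg, subF, subTs]
  | j+1, k, u => by simp [Dg, subF, subTs, subT, sub_Dg j]

theorem inst_Dg (j : ℕ) (t : Tm) :
    inst0 (Dg (j+1)) t = .ex (.and (Rl cT (liftT 0 t) (.bvar 0)) (Dg j)) := by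
  simp [Dg, inst0, subF, subTs, subT, sub_Dg j]

/-! ### Lower bound -/

def val : Tm → ℕ
  | .func 0 (.cons t .nil) => val t + 1
  | _ => 0

theorem val_s (t : Tm) : val (sT t) = val t + 1 := by simp [val]

def vm (m : ℕ) : ℕ → Tms → Prop
  | 0, .cons y (.cons x (.cons z .nil)) =>
      val y + 2 ^ val x = val z ∧ ¬ (val y ≤ m ∧ m < val z)
  | _, _ => True

theorem iterExp_two_pow : ∀ j n, iterExp j (2 ^ n) = iterExp (j+1) n
  | 0, n => rfl
  | j+1, n => by rw [iterExp, iterExp_two_pow j n]; rfl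

theorem le_iterExp : ∀ j n, n ≤ iterExp j n
  | 0, n => le_rfl
  | j+1, n => (le_iterExp j n).trans (Nat.lt_two_pow_self).le

theorem goal_false (m : ℕ) (T : List (Fm × Tm)) : ∀ (j : ℕ) (t : Tm),
    holds (vm m) T (inst0 (Dg (j+1)) t) → ¬ m < iterExp (j+1) (val t) := by
  intro j
  induction j with
  | zero =>
    intro t h
    rw [inst_Dg] at h
    simp only [holds] at h
    obtain ⟨u, -, h⟩ := h
    simp only [inst0, subF, subTs, subT, holds, sub_liftT, if_true, vm, val, iterExp] at h ⊢
    obtain ⟨⟨h1, h2⟩, -⟩ := h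
    omega
  | succ j ih =>
    intro t h
    rw [inst_Dg] at h
    simp only [holds] at h
    obtain ⟨u, -, h⟩ := h
    simp only [inst0, subF] at h
    rw [holds] at h
    have h2 := ih u h.2
    have h1 := h.1
    simp only [subTs, subT, holds, sub_liftT, if_true, vm, val] at h1
    rw [← iterExp_two_pow]
    have : val u = 2 ^ val t := by omega
    rwa [this] at h2

theorem vm_trans (m : ℕ) (y x z w : Tm) :
    vm m 0 (.cons y (.cons x (.cons z .nil))) → vm m 0 (.cons z (.cons x (.cons w .nil))) →
    vm m 0 (.cons y (.cons (sT x) (.cons w .nil))) := by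
  simp only [vm, val, pow_succ]
  omega

theorem B2_holds (m : ℕ) (T : List (Fm × Tm)) : holds (vm m) T B2 := by
  simp only [B2, holds, inst0, subF]
  intro t1 _ t2 _ t3 _ t4 _
  simp only [subTs, subT]
  exact vm_trans m _ _ _ _

theorem weak_Dg : ∀ j, posW (Dg j) = true
  | 0 => by simp [Dg, posW, negW]
  | j+1 => by simp [Dg, posW, weak_Dg j]

theorem lower (j : ℕ) (d : Deriv [B1, B2] [inst0 (Dg (j+1)) cT]) (hc : d.cutFms = []) :
    iterExp (j+1) 0 ≤ d.size := by
  by_contra hlt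
  push Not at hlt
  obtain ⟨T, h1, h2⟩ := herbrand d
    (by simp [WeakSeq, negW, posW, inst0, weak_sub, weak_Dg]) hc
  obtain ⟨m, hm, hm'⟩ : ∃ m ∈ Finset.range (iterExp (j+1) 0),
      m ∉ (T.map (fun p => val p.2)).toFinset := by
    apply Finset.exists_mem_notMem_of_card_lt_card
    calc _ ≤ (T.map (fun p => val p.2)).length := List.toFinset_card_le _
      _ < _ := by simp; omega
  have := h2 T (fun x hx => hx) (vm m)
  simp only [Sat, List.mem_cons, List.not_mem_nil, or_false, forall_eq_or_imp, forall_eq,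
    exists_eq_left] at this
  refine goal_false m T j cT (this ⟨?_, B2_holds m T⟩) ?_
  · simp only [B1, holds]
    intro t ht
    simp only [inst0, subF, subTs, subT, holds, if_true, vm, val]
    have : val t ≠ m := by
      rintro rfl
      exact hm' (by simp only [List.mem_toFinset, List.mem_map]; exact ⟨_, ht, rfl⟩)
    simp; omega
  · simpa [val] using hm

theorem iterExp_lt : ∀ k {a b : ℕ}, a < b → iterExp k a < iterExp k b
  | 0, _, _, h => h
  | k+1, _, _, h => Nat.pow_lt_pow_right (by norm_num) (iterExp_lt k h)

theorem iterExp_add : ∀ k l n, iterExp (k + l) n = iterExp k (iterExp l n)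
  | 0, l, n => by simp [iterExp]
  | k+1, l, n => by rw [Nat.add_right_comm, iterExp, iterExp_add k l n]; rfl

theorem self_le_iterExp : ∀ j, j ≤ iterExp j 0
  | 0 => le_rfl
  | j+1 => by
    have := self_le_iterExp j
    have h2 : iterExp j 0 < 2 ^ iterExp j 0 := Nat.lt_two_pow_self
    rw [iterExp]; omega

theorem growth (k : ℕ) : iterExp k (2 * k + 4) < iterExp (2 * k + 4) 0 := by
  have e : 2 * k + 4 = k + (k + 4) := by ring
  conv_rhs => rw [e, iterExp_add]
  apply iterExp_lt
  rw [iterExp]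
  have h1 := self_le_iterExp (k+3)
  have h2 : 2 ^ (k+3) ≤ 2 ^ iterExp (k+3) 0 := Nat.pow_le_pow_right (by norm_num) h1
  have h3 : k < 2 ^ k := Nat.lt_two_pow_self
  have h4 : 2 ^ (k+3) = 8 * 2 ^ k := by ring
  omega

/-! ### Short proofs with cuts -/

theorem weakenL {Γ Δ : List Fm} (d : Deriv Γ Δ) (hd : d.Std) :
    ∀ Γ' : List Fm, ∃ e : Deriv (Γ' ++ Γ) Δ, e.Std ∧ e.size ≤ d.size + Γ'.length
  | [] => ⟨d, hd, by simp⟩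
  | A :: Γ' => by
    obtain ⟨e, h1, h2⟩ := weakenL d hd Γ'
    exact ⟨.wL A _ _ e, h1, by simp only [Deriv.size, List.length_cons]; omega⟩

theorem weakenR {Γ Δ : List Fm} (d : Deriv Γ Δ) (hd : d.Std) :
    ∀ Δ' : List Fm, ∃ e : Deriv Γ (Δ' ++ Δ), e.Std ∧ e.size ≤ d.size + Δ'.length
  | [] => ⟨d, hd, by simp⟩
  | A :: Δ' => by
    obtain ⟨e, h1, h2⟩ := weakenR d hd Δ'
    exact ⟨.wR A _ _ e, h1, by simp only [Deriv.size, List.length_cons]; omega⟩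

theorem contractL {Γ' Δ : List Fm} : ∀ (Γ : List Fm), Γ ⊆ Γ' →
    ∀ d : Deriv (Γ' ++ Γ) Δ, d.Std →
    ∃ e : Deriv Γ' Δ, e.Std ∧ e.size ≤ d.size + 3 * Γ.length + 1
  | [], _, d, hd => ⟨.permL _ _ _ (by simp) d, by simpa [Deriv.Std] using hd, by simp [Deriv.size]⟩
  | A :: Γ, hs, d, hd => by
    have hA : A ∈ Γ' := hs (by simp)
    obtain ⟨s, t, rfl⟩ := List.append_of_mem hA
    have p1 : ((s ++ A :: t) ++ A :: Γ).Perm (A :: A :: (s ++ t ++ Γ)) := by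
      rw [← Multiset.coe_eq_coe]
      simp only [← Multiset.coe_add, ← Multiset.cons_coe, ← Multiset.singleton_add]
      abel
    have p2 : (A :: (s ++ t ++ Γ)).Perm ((s ++ A :: t) ++ Γ) := by
      rw [← Multiset.coe_eq_coe]
      simp only [← Multiset.coe_add, ← Multiset.cons_coe, ← Multiset.singleton_add]
      abel
    obtain ⟨e, h1, h2⟩ := contractL Γ (fun x hx => hs (by simp [hx]))
      (.permL _ _ _ p2 (.cL _ _ _ (.permL _ _ _ p1 d))) hd
    exact ⟨e, h1, by simp only [Deriv.size, List.length_cons] at h2 ⊢; omega⟩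

theorem contractR {Γ Δ' : List Fm} : ∀ (Δ : List Fm), Δ ⊆ Δ' →
    ∀ d : Deriv Γ (Δ' ++ Δ), d.Std →
    ∃ e : Deriv Γ Δ', e.Std ∧ e.size ≤ d.size + 3 * Δ.length + 1
  | [], _, d, hd => ⟨.permR _ _ _ (by simp) d, by simpa [Deriv.Std] using hd, by simp [Deriv.size]⟩
  | A :: Δ, hs, d, hd => by
    have hA : A ∈ Δ' := hs (by simp)
    obtain ⟨s, t, rfl⟩ := List.append_of_mem hA
    have p1 : ((s ++ A :: t) ++ A :: Δ).Perm (A :: A :: (s ++ t ++ Δ)) := by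
      rw [← Multiset.coe_eq_coe]
      simp only [← Multiset.coe_add, ← Multiset.cons_coe, ← Multiset.singleton_add]
      abel
    have p2 : (A :: (s ++ t ++ Δ)).Perm ((s ++ A :: t) ++ Δ) := by
      rw [← Multiset.coe_eq_coe]
      simp only [← Multiset.coe_add, ← Multiset.cons_coe, ← Multiset.singleton_add]
      abel
    obtain ⟨e, h1, h2⟩ := contractR Δ (fun x hx => hs (by simp [hx]))
      (.permR _ _ _ p2 (.cR _ _ _ (.permR _ _ _ p1 d))) hd
    exact ⟨e, h1, by simp only [Deriv.size, List.length_cons] at h2 ⊢; omega⟩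

theorem structural {Γ Δ Γ' Δ' : List Fm} (d : Deriv Γ Δ) (hd : d.Std)
    (h1 : Γ ⊆ Γ') (h2 : Δ ⊆ Δ') :
    ∃ e : Deriv Γ' Δ', e.Std ∧ e.size ≤
      d.size + Γ'.length + Δ'.length + 3 * Γ.length + 3 * Δ.length + 2 := by
  obtain ⟨e1, a1, b1⟩ := weakenL d hd Γ'
  obtain ⟨e2, a2, b2⟩ := contractL Γ h1 e1 a1
  obtain ⟨e3, a3, b3⟩ := weakenR e2 a2 Δ'
  obtain ⟨e4, a4, b4⟩ := contractR Δ h2 e3 a3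
  exact ⟨e4, a4, by omega⟩

/-- Set-like derivability with standard proofs of size `≤ 1000 n` and bounded contexts. -/
def Der (Γ Δ : List Fm) (n : ℕ) : Prop :=
  Γ.length ≤ 40 ∧ Δ.length ≤ 40 ∧ ∃ d : Deriv Γ Δ, d.Std ∧ d.size ≤ 1000 * n

theorem Der.of {Γ Δ Γ' Δ' : List Fm} (d : Deriv Γ' Δ') (n : ℕ) (hd : d.Std)
    (h1 : Γ' ⊆ Γ) (h2 : Δ' ⊆ Δ) (l1 : Γ.length ≤ 40) (l2 : Δ.length ≤ 40)
    (l3 : Γ'.length ≤ 90) (l4 : Δ'.length ≤ 90) (hn : d.size ≤ 1000 * n + 10) :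
    Der Γ Δ (n+1) := by
  obtain ⟨e, a, b⟩ := structural d hd h1 h2
  exact ⟨l1, l2, e, a, by omega⟩

theorem Der.imp_le {Γ Δ : List Fm} {n m : ℕ} (h : Der Γ Δ n) (hn : n ≤ m) : Der Γ Δ m := by
  obtain ⟨a, b, d, hd, h⟩ := h
  exact ⟨a, b, d, hd, by omega⟩

theorem Der.weak {Γ Δ Γ' Δ' : List Fm} {n : ℕ} (h : Der Γ' Δ' n)
    (h1 : Γ' ⊆ Γ) (h2 : Δ' ⊆ Δ) (l1 : Γ.length ≤ 40) (l2 : Δ.length ≤ 40) :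
    Der Γ Δ (n+1) := by
  obtain ⟨a, b, d, hd, hn⟩ := h
  exact Der.of d n hd h1 h2 l1 l2 (by omega) (by omega) (by omega)

theorem Der.ax {Γ Δ : List Fm} (A : Fm) (h1 : A ∈ Γ) (h2 : A ∈ Δ)
    (l1 : Γ.length ≤ 40) (l2 : Δ.length ≤ 40) : Der Γ Δ 1 :=
  Der.of (.ax A) 0 trivial (by simpa using h1) (by simpa using h2) l1 l2 (by simp) (by simp)
    (by simp [Deriv.size])

theorem Der.andL {Γ Δ : List Fm} {n : ℕ} {A B : Fm} (h : A.and B ∈ Γ)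
    (h1 : Der (A :: B :: Γ) Δ n) : Der Γ Δ (n+1) := by
  obtain ⟨a, b, d, hd, hn⟩ := h1
  simp only [List.length_cons] at a
  exact Der.of (.andL A B _ _ d) n hd (by simp [h]) (by simp) (by omega) b
    (by simp only [List.length_cons]; omega) (by omega) (by simp only [Deriv.size]; omega)

theorem Der.andR {Γ Δ : List Fm} {n m : ℕ} {A B : Fm}
    (h1 : Der Γ (A :: Δ) n) (h2 : Der Γ (B :: Δ) m) : Der Γ (A.and B :: Δ) (n+m+1) := by
  obtain ⟨a, b, d, hd, hn⟩ := h1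
  obtain ⟨a', b', d', hd', hn'⟩ := h2
  simp only [List.length_cons] at b
  exact Der.of (.andR A B _ _ _ _ d d') (n+m) ⟨hd, hd'⟩ (by simp)
    (by simp) (by omega)
    (by simp only [List.length_cons]; omega)
    (by simp only [List.length_append]; omega)
    (by simp only [List.length_cons, List.length_append]; omega)
    (by simp only [Deriv.size]; omega)

theorem Der.impL {Γ Δ : List Fm} {n m : ℕ} {A B : Fm} (h : A.imp B ∈ Γ)
    (h1 : Der Γ (A :: Δ) n) (h2 : Der (B :: Γ) Δ m) : Der Γ Δ (n+m+1) := by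
  obtain ⟨a, b, d, hd, hn⟩ := h1
  obtain ⟨a', b', d', hd', hn'⟩ := h2
  exact Der.of (.impL A B _ _ _ _ d d') (n+m) ⟨hd, hd'⟩ (by simp [h])
    (by simp) a b'
    (by simp only [List.length_cons, List.length_append]; omega)
    (by simp only [List.length_append]; omega)
    (by simp only [Deriv.size]; omega)

theorem Der.cut {Γ Δ : List Fm} {n m : ℕ} (A : Fm)
    (h1 : Der Γ (A :: Δ) n) (h2 : Der (A :: Γ) Δ m) : Der Γ Δ (n+m+1) := by
  obtain ⟨a, b, d, hd, hn⟩ := h1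
  obtain ⟨a', b', d', hd', hn'⟩ := h2
  exact Der.of (.cut A _ _ _ _ d d') (n+m) ⟨hd, hd'⟩ (by simp)
    (by simp) a b'
    (by simp only [List.length_append]; omega)
    (by simp only [List.length_append]; omega)
    (by simp only [Deriv.size]; omega)

theorem Der.impR {Γ Δ : List Fm} {n : ℕ} {A B : Fm}
    (h1 : Der (A :: Γ) (B :: Δ) n) : Der Γ (A.imp B :: Δ) (n+1) := by
  obtain ⟨a, b, d, hd, hn⟩ := h1
  simp only [List.length_cons] at a b
  exact Der.of (.impR A B _ _ d) n hd (by simp) (by simp) (by omega)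
    (by simp only [List.length_cons]; omega) (by omega)
    (by simp only [List.length_cons]; omega) (by simp only [Deriv.size]; omega)

theorem Der.allL {Γ Δ : List Fm} {n : ℕ} {A : Fm} (t : Tm) (A' : Fm) (h : A.all ∈ Γ)
    (e : inst0 A t = A') (h1 : Der (A' :: Γ) Δ n) : Der Γ Δ (n+1) := by
  subst e
  obtain ⟨a, b, d, hd, hn⟩ := h1
  simp only [List.length_cons] at a
  exact Der.of (.allL t A _ _ d) n hd (by simp [h]) (by simp) (by omega) b
    (by simp only [List.length_cons]; omega) (by omega) (by simp only [Deriv.size]; omega)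

theorem Der.exR {Γ Δ : List Fm} {n : ℕ} {A : Fm} (t : Tm) (A' : Fm)
    (e : inst0 A t = A') (h1 : Der Γ (A' :: Δ) n) : Der Γ (A.ex :: Δ) (n+1) := by
  subst e
  obtain ⟨a, b, d, hd, hn⟩ := h1
  simp only [List.length_cons] at b
  exact Der.of (.exR t A _ _ d) n hd (by simp) (by simp) (by omega)
    (by simp only [List.length_cons]; omega) (by omega)
    (by simp only [List.length_cons]; omega) (by simp only [Deriv.size]; omega)

theorem mem_fold (a : ℕ) : ∀ l : List Fm,
    a ∈ l.foldr (fun A l => fvF A ++ l) [] ↔ ∃ A ∈ l, a ∈ fvF A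
  | [] => by simp
  | A :: l => by
    rw [List.foldr_cons, List.mem_append, mem_fold a l]; simp

theorem notMem_fvSeq {a : ℕ} {Γ Δ : List Fm} (h1 : ∀ A ∈ Γ, a ∉ fvF A)
    (h2 : ∀ A ∈ Δ, a ∉ fvF A) : a ∉ fvSeq Γ Δ := by
  rw [fvSeq, mem_fold]
  rintro ⟨A, hA, h⟩
  rcases List.mem_append.1 hA with hA | hA
  · exact h1 A hA h
  · exact h2 A hA h

theorem Der.allR {Γ Δ : List Fm} {n : ℕ} {A : Fm} (x : ℕ) (A' : Fm)
    (e : inst0 A (.fvar x) = A') (f1 : ∀ A ∈ Γ, x ∉ fvF A) (f2 : ∀ B ∈ A.all :: Δ, x ∉ fvF B)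
    (h1 : Der Γ (A' :: Δ) n) : Der Γ (A.all :: Δ) (n+1) := by
  subst e
  obtain ⟨a, b, d, hd, hn⟩ := h1
  simp only [List.length_cons] at b
  exact Der.of (.allR x A _ _ d) n ⟨notMem_fvSeq f1 f2, hd⟩ (by simp) (by simp) (by omega)
    (by simp only [List.length_cons]; omega) (by omega)
    (by simp only [List.length_cons]; omega) (by simp only [Deriv.size]; omega)

theorem Der.exL {Γ Δ : List Fm} {n : ℕ} {A : Fm} (x : ℕ) (A' : Fm) (h : A.ex ∈ Γ)
    (e : inst0 A (.fvar x) = A') (f1 : ∀ A ∈ Γ, x ∉ fvF A) (f2 : ∀ B ∈ Δ, x ∉ fvF B)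
    (h1 : Der (A' :: Γ) Δ n) : Der Γ Δ (n+1) := by
  subst e
  obtain ⟨a, b, d, hd, hn⟩ := h1
  simp only [List.length_cons] at a
  exact Der.of (.exL x A _ _ d) n ⟨notMem_fvSeq (by
      intro B hB
      rcases List.mem_cons.1 hB with rfl | hB
      · exact f1 _ h
      · exact f1 _ hB) f2, hd⟩ (by simp [h]) (by simp) (by omega) b
    (by simp only [List.length_cons]; omega) (by omega) (by simp only [Deriv.size]; omega)

/-- Orevkov's formulas in the variable `bvar 0`. -/
def AF : ℕ → Fm
  | 0 => triv
  | i+1 => .all (.imp (AF i) (.ex (.and (AF i) (Rl (.bvar 1) (.bvar 2) (.bvar 0)))))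

theorem sub_AF : ∀ (j k : ℕ) (u : Tm), subF (k+1) u (AF j) = AF j
  | 0, k, u => by simp [AF, subF, subTs]
  | j+1, k, u => by simp [AF, subF, subTs, subT, sub_AF j]

def Af (i : ℕ) (t : Tm) : Fm := inst0 (AF i) t
def Ef (i : ℕ) (y x : Tm) : Fm := .ex (.and (AF i) (Rl x y (.bvar 0)))
def Df (i : ℕ) (t : Tm) : Fm := inst0 (Dg i) t

/-- insensitive to lifting and substitution -/
def Cl (t : Tm) : Prop := (∀ k, liftT k t = t) ∧ ∀ k u, subT k u t = t

theorem Cl_fvar (a : ℕ) : Cl (.fvar a) := ⟨fun _ => by simp [liftT], fun _ _ => by simp [subT]⟩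
theorem Cl_s {t : Tm} (h : Cl t) : Cl (sT t) :=
  ⟨fun _ => by simp [liftT, liftTs, h.1], fun _ _ => by simp [subT, subTs, h.2]⟩

theorem Af_zero (t : Tm) : Af 0 t = triv := by simp [Af, AF, inst0, subF, subTs]

theorem Af_succ (i : ℕ) {t : Tm} (h : Cl t) : Af (i+1) t =
    .all (.imp (AF i) (.ex (.and (AF i) (Rl (.bvar 1) t (.bvar 0))))) := by
  simp [Af, AF, inst0, subF, subTs, subT, sub_AF, h.1]

theorem inst_imp (i : ℕ) {t u : Tm} (h : Cl t) (hu : Cl u) :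
    inst0 (.imp (AF i) (.ex (.and (AF i) (Rl (.bvar 1) t (.bvar 0))))) u =
      .imp (Af i u) (Ef i t u) := by
  simp [Af, Ef, inst0, subF, subTs, subT, sub_AF, h.2, hu.1]

theorem inst_and (i : ℕ) {t x u : Tm} (h : Cl t) (hx : Cl x) :
    inst0 (.and (AF i) (Rl x t (.bvar 0))) u = .and (Af i u) (Rl x t u) := by
  simp [Af, inst0, subF, subTs, subT, h.2, hx.2]

theorem Df_zero (t : Tm) : Df 0 t = triv := by simp [Df, Dg, inst0, subF, subTs]

theorem Df_succ (i : ℕ) {t : Tm} (h : Cl t) : Df (i+1) t =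
    .ex (.and (Rl cT t (.bvar 0)) (Dg i)) := by
  simp [Df, Dg, inst0, subF, subTs, subT, sub_Dg, h.1]

theorem inst_Dand (i : ℕ) {t u : Tm} (h : Cl t) :
    inst0 (.and (Rl cT t (.bvar 0)) (Dg i)) u = .and (Rl cT t u) (Df i u) := by
  simp [Df, inst0, subF, subTs, subT, h.2]

theorem fv_AF : ∀ i, fvF (AF i) = []
  | 0 => by simp [AF, fvF, fvTs]
  | i+1 => by simp [AF, fvF, fvTs, fvT, fv_AF i]

theorem fv_Af (i : ℕ) {t : Tm} (h : Cl t) {x : ℕ} (hx : x ∉ fvT t) : x ∉ fvF (Af i t) := by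
  cases i with
  | zero => simp [Af_zero, fvF, fvTs]
  | succ i => simpa [Af_succ i h, fvF, fvTs, fvT, fv_AF] using hx

theorem fv_Dg : ∀ (i : ℕ) {x : ℕ}, x ≠ 0 → x ∉ fvF (Dg i)
  | 0, x, h => by simp [Dg, fvF, fvTs]
  | i+1, x, h => by simpa [Dg, fvF, fvTs, fvT, h] using fv_Dg i h

theorem fv_Df (i : ℕ) {t : Tm} (h : Cl t) {x : ℕ} (h0 : x ≠ 0) (hx : x ∉ fvT t) :
    x ∉ fvF (Df i t) := by
  cases i with
  | zero => simp [Df_zero, fvF, fvTs]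
  | succ i => simp [Df_succ i h, fvF, fvTs, fvT, h0, hx, fv_Dg]

theorem fv_B1 {x : ℕ} (h : x ≠ 0) : x ∉ fvF B1 := by simp [fvF, fvTs, fvT, h]
theorem fv_B2 {x : ℕ} : x ∉ fvF B2 := by simp [fvF, fvTs, fvT]
theorem fv_Ef {i x : ℕ} {t u : Tm} (h1 : x ∉ fvT t) (h2 : x ∉ fvT u) : x ∉ fvF (Ef i t u) := by
  simp [Ef, fvF, fvTs, fvT, fv_AF, h1, h2]

theorem fv_imp (x : ℕ) (A B : Fm) : x ∈ fvF (.imp A B) ↔ x ∈ fvF A ∨ x ∈ fvF B := by simp [fvF]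
theorem fv_and (x : ℕ) (A B : Fm) : x ∈ fvF (.and A B) ↔ x ∈ fvF A ∨ x ∈ fvF B := by simp [fvF]
theorem fv_Rl (w : ℕ) (x y z : Tm) :
    w ∈ fvF (Rl x y z) ↔ w ∈ fvT x ∨ w ∈ fvT y ∨ w ∈ fvT z := by simp [fvF, fvTs]

theorem der_triv {Γ : List Fm} (h : Γ.length ≤ 39) : Der Γ [triv] 2 :=
  Der.impR (Der.ax (.atom 1 .nil) (by simp) (by simp) (by simp; omega) (by simp))

/-- use of the axiom `B1` -/
theorem der_B1 {Γ : List Fm} (x : ℕ) (h : B1 ∈ Γ) (l : Γ.length ≤ 39) :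
    Der Γ [Rl (.fvar x) cT (sT (.fvar x))] 2 :=
  Der.allL (.fvar x) (Rl (.fvar x) cT (sT (.fvar x))) h (by simp [inst0, subF, subTs, subT])
    (Der.ax _ List.mem_cons_self List.mem_cons_self (by simp; omega) (by simp))

/-- use of the axiom `B2` -/
theorem der_B2 {Γ : List Fm} (y x z w : ℕ) (h : B2 ∈ Γ)
    (h1 : Rl (.fvar y) (.fvar x) (.fvar z) ∈ Γ) (h2 : Rl (.fvar z) (.fvar x) (.fvar w) ∈ Γ)
    (l : Γ.length ≤ 30) :
    Der Γ [Rl (.fvar y) (sT (.fvar x)) (.fvar w)] 9 := by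
  refine Der.allL (n := 8) (.fvar y) (.all (.all (.all
    (body2 (.fvar y) (.bvar 2) (.bvar 1) (.bvar 0))))) h
    (by simp [inst0, subF, subTs, subT, liftT]) ?_
  refine Der.allL (n := 7) (.fvar x) (.all (.all
    (body2 (.fvar y) (.fvar x) (.bvar 1) (.bvar 0)))) List.mem_cons_self
    (by simp [inst0, subF, subTs, subT, liftT]) ?_
  refine Der.allL (n := 6) (.fvar z) (.all
    (body2 (.fvar y) (.fvar x) (.fvar z) (.bvar 0))) List.mem_cons_self
    (by simp [inst0, subF, subTs, subT, liftT]) ?_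
  refine Der.allL (n := 5) (.fvar w) (body2 (.fvar y) (.fvar x) (.fvar z) (.fvar w))
    List.mem_cons_self
    (by simp [inst0, subF, subTs, subT]) ?_
  refine Der.impL (n := 1) (m := 3) List.mem_cons_self ?_ ?_
  · exact Der.ax _ (by simp only [List.mem_cons, h1, or_true]) List.mem_cons_self
      (by simp; omega) (by simp)
  refine Der.impL (n := 1) (m := 1) List.mem_cons_self ?_ ?_
  · exact Der.ax _ (by simp only [List.mem_cons, h2, or_true]) List.mem_cons_self
      (by simp; omega) (by simp)
  · exact Der.ax _ List.mem_cons_self List.mem_cons_self (by simp; omega) (by simp)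

/-- unfolding `Af (i+1) y` at an argument satisfying `Af i` -/
theorem der_unfold {Γ Δ : List Fm} {n : ℕ} (i y x z : ℕ) (h1 : Af (i+1) (.fvar y) ∈ Γ)
    (h2 : Af i (.fvar x) ∈ Γ) (hy : z ≠ y) (hx : z ≠ x)
    (hl : Δ.length ≤ 39) (f1 : ∀ A ∈ Γ, z ∉ fvF A) (f2 : ∀ A ∈ Δ, z ∉ fvF A)
    (h : Der (Af i (.fvar z) :: Rl (.fvar x) (.fvar y) (.fvar z) ::
      (Af i (.fvar z)).and (Rl (.fvar x) (.fvar y) (.fvar z)) ::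
      Ef i (.fvar y) (.fvar x) :: (Af i (.fvar x)).imp (Ef i (.fvar y) (.fvar x)) :: Γ) Δ n) :
    Der Γ Δ (n + 5) := by
  have lg := h.1
  have lD := h.2.1
  simp only [List.length_cons] at lg
  have fE : z ∉ fvF (Ef i (.fvar y) (.fvar x)) :=
    fv_Ef (by simp [fvT, hy]) (by simp [fvT, hx])
  refine Der.allL (n := n+4) (.fvar x) ((Af i (.fvar x)).imp (Ef i (.fvar y) (.fvar x)))
    (A := .imp (AF i) (.ex (.and (AF i) (Rl (.bvar 1) (.fvar y) (.bvar 0)))))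
    (by rw [← Af_succ i (Cl_fvar y)]; exact h1)
    (inst_imp i (Cl_fvar y) (Cl_fvar x)) ?_
  refine Der.imp_le (n := 1 + (n+2) + 1) (Der.impL List.mem_cons_self ?_ ?_) (by omega)
  · exact Der.ax _ (by simp only [List.mem_cons, h2, or_true]) List.mem_cons_self
      (by simp; omega) (by simp; omega)
  refine Der.exL (n := n+1) z _ List.mem_cons_self (inst_and i (Cl_fvar y) (Cl_fvar x)) ?_ f2 ?_
  · intro A hA
    simp only [List.mem_cons] at hA
    rcases hA with rfl | rfl | hA
    · exact fE
    · rw [fv_imp]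
      exact not_or.2 ⟨fv_Af i (Cl_fvar x) (by simp [fvT, hx]), fE⟩
    · exact f1 A hA
  exact Der.andL List.mem_cons_self h

theorem prog (i a : ℕ) : Der [B1, B2, Af i (.fvar a)] [Af i (sT (.fvar a))] 30 := by
  cases i with
  | zero =>
    rw [Af_zero, Af_zero]
    exact (der_triv (by simp)).imp_le (by norm_num)
  | succ i =>
    rw [Af_succ i (Cl_s (Cl_fvar a))]
    refine Der.imp_le (n := 23 + 1) (Der.allR (a+1) _
      (inst_imp i (Cl_s (Cl_fvar a)) (Cl_fvar _)) ?_ ?_ ?_) (by norm_num)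
    · simp only [List.forall_mem_cons]
      exact ⟨fv_B1 (by omega), fv_B2, fv_Af _ (Cl_fvar a) (by simp [fvT]), by simp⟩
    · simp [fvF, fvTs, fvT, fv_AF]
    refine Der.impR (n := 22) ?_
    refine der_unfold (n := 17) i a (a+1) (a+2) (by simp) (by simp) (by omega) (by omega) (by simp) ?_ ?_ ?_
    · simp only [List.forall_mem_cons]
      exact ⟨fv_Af _ (Cl_fvar _) (by simp [fvT]), fv_B1 (by omega), fv_B2,
        fv_Af _ (Cl_fvar a) (by simp [fvT]), by simp⟩
    · simp only [List.forall_mem_cons]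
      exact ⟨fv_Ef (by simp [fvT, fvTs]) (by simp [fvT]), by simp⟩
    refine der_unfold (n := 12) i a (a+2) (a+3) (by simp) (by simp) (by omega) (by omega) (by simp) ?_ ?_ ?_
    · simp only [List.forall_mem_cons, fv_imp, fv_and, fv_Rl, not_or]
      have e1 : a + 3 ∉ fvF (Ef i (.fvar a) (.fvar (a+1))) :=
        fv_Ef (by simp [fvT]) (by simp [fvT])
      have e2 : a + 3 ∉ fvF (Af i (.fvar (a+2))) := fv_Af _ (Cl_fvar _) (by simp [fvT])
      have e3 : a + 3 ∉ fvF (Af i (.fvar (a+1))) := fv_Af _ (Cl_fvar _) (by simp [fvT])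
      have e4 : a + 3 ∉ fvF (Af (i+1) (.fvar a)) := fv_Af _ (Cl_fvar _) (by simp [fvT])
      have e5 : a + 3 ∉ fvF B1 := fv_B1 (by omega)
      have e6 : a + 3 ∉ fvF B2 := fv_B2
      refine ⟨e2, ?_, ⟨e2, ?_⟩, e1, ⟨e3, e1⟩, e3, e5, e6, e4, by simp⟩ <;> simp [fvT]
    · simp only [List.forall_mem_cons]
      exact ⟨fv_Ef (by simp [fvT, fvTs]) (by simp [fvT]), by simp⟩
    refine Der.exR (n := 11) (.fvar (a+3)) _ (inst_and i (Cl_s (Cl_fvar _)) (Cl_fvar _)) ?_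
    refine Der.andR (n := 1) (m := 9) ?_ ?_
    · exact Der.ax _ List.mem_cons_self List.mem_cons_self (by simp) (by simp)
    · exact der_B2 (a+1) a (a+2) (a+3) (by simp) (by simp) (by simp) (by simp)

theorem zero_der (i : ℕ) : Der [B1, B2] [Af i cT] 40 := by
  cases i with
  | zero =>
    rw [Af_zero]
    exact (der_triv (by simp)).imp_le (by norm_num)
  | succ i =>
    rw [Af_succ i (Cl_fvar 0)]
    refine Der.imp_le (n := 37 + 1) (Der.allR 1 _
      (inst_imp i (Cl_fvar 0) (Cl_fvar _)) ?_ ?_ ?_) (by norm_num)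
    · simp only [List.forall_mem_cons]
      exact ⟨fv_B1 (by omega), fv_B2, by simp⟩
    · simp [fvF, fvTs, fvT, fv_AF]
    refine Der.impR (n := 36) ?_
    refine Der.exR (n := 35) (sT (.fvar 1)) _ (inst_and i (Cl_fvar 0) (Cl_fvar _)) ?_
    refine Der.imp_le (n := 31 + 2 + 1) (Der.andR ?_ ?_) (by norm_num)
    · exact Der.weak (prog i 1) (by simp) (by simp) (by simp) (by simp)
    · exact der_B1 1 (by simp) (by simp)

theorem main_der (j : ℕ) : ∀ a, Der [B1, B2, Af j (.fvar a)] [Df j (.fvar a)] (60 * (j+1)) := by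
  induction j with
  | zero =>
    intro a
    rw [Df_zero]
    exact (der_triv (by simp)).imp_le (by norm_num)
  | succ j ih =>
    intro a
    refine Der.imp_le (n := 41 + (60 * (j+1) + 1 + 1 + 1 + 1 + 5) + 1)
      (Der.cut (Af j cT) ?_ ?_) (by omega)
    · exact Der.weak (zero_der j) (by simp) (by simp) (by simp) (by simp)
    refine der_unfold j a 0 (a+1) (by simp) (by simp) (by omega) (by omega) (by simp) ?_ ?_ ?_
    · simp only [List.forall_mem_cons]
      exact ⟨fv_Af _ (Cl_fvar _) (by simp [fvT]), fv_B1 (by omega), fv_B2,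
        fv_Af _ (Cl_fvar a) (by simp [fvT]), by simp⟩
    · simp only [List.forall_mem_cons]
      exact ⟨fv_Df _ (Cl_fvar _) (by omega) (by simp [fvT]), by simp⟩
    rw [Df_succ j (Cl_fvar a)]
    refine Der.exR (.fvar (a+1)) _ (inst_Dand j (Cl_fvar a)) ?_
    refine Der.imp_le (n := 1 + (60 * (j+1) + 1) + 1) (Der.andR ?_ ?_) (by omega)
    · exact Der.ax (Rl cT (.fvar a) (.fvar (a+1))) (by simp) List.mem_cons_self
        (by simp) (by simp)
    · exact Der.weak (ih (a+1)) (by simp) (by simp) (by simp) (by simp)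

theorem upper (j : ℕ) : Der [B1, B2] [Df j cT] (60 * j + 200) :=
  Der.imp_le (n := 41 + (60 * (j+1) + 1) + 1) (Der.cut (Af j cT)
    (Der.weak (zero_der j) (by simp) (by simp) (by simp) (by simp))
    (Der.weak (main_der j 0) (by simp) (by simp) (by simp) (by simp))) (by omega)

theorem sz_sub_Dg : ∀ j, szF (Df j cT) ≤ 6 * j + 3 := by
  have h : ∀ j, szF (Dg j) ≤ 6 * j + 3 := by
    intro j
    induction j with
    | zero => simp [Dg, szF, szTs]
    | succ j ih => simp [Dg, szF, szTs, szT]; omega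
  intro j
  cases j with
  | zero => simp [Df_zero, szF, szTs]
  | succ j =>
    have := h j
    simp [Df_succ j (Cl_fvar 0), szF, szTs, szT]; omega

theorem fo_Df (j : ℕ) : isFO (Df j cT) = true := by
  have h : ∀ j, noEpsF (Dg j) = true := by
    intro j
    induction j with
    | zero => simp [Dg, noEpsF, noEpsTs]
    | succ j ih => simp [Dg, noEpsF, noEpsTs, noEpsT, ih]
  cases j with
  | zero => simp [Df_zero, isFO, noEpsF, noEpsTs]
  | succ j => simp [Df_succ j (Cl_fvar 0), isFO, noEpsF, noEpsTs, noEpsT, h]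

/-- Statman/Orevkov. There is a family of first-order
sequents `S i` together with LK-proofs of them such that: (1) the size of `S i`
is polynomially bounded in `i`; (2) no elementary function of `i` bounds the
size of the smallest cut-free LK-proofs of `S i`; (3) the given LK-proofs
(with cuts) have size polynomially bounded in `i`. -/
theorem statman_orevkov :
    ∃ S : ℕ → List Fm × List Fm,
      (∀ i, FOSeq (S i).1 (S i).2) ∧
      -- (1) the size of S_i is polynomial in i
      (∃ p : Polynomial ℕ, ∀ i, seqSize (S i).1 (S i).2 ≤ p.eval i) ∧
      -- (2) no elementary bound on the smallest cut-free LK-proofs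
      (∀ f : ℕ → ℕ, IsElementary f →
        ¬ ∀ i, ∃ d : Deriv (S i).1 (S i).2,
            d.Std ∧ d.cutFms = [] ∧ d.size ≤ f i) ∧
      -- (3) there are LK-proofs with cuts of polynomial size
      (∃ q : Polynomial ℕ, ∀ i, ∃ d : Deriv (S i).1 (S i).2,
          d.Std ∧ d.size ≤ q.eval i) := by
  refine ⟨fun i => ([B1, B2], [Df i cT]), ?_, ⟨6 * Polynomial.X + 30, ?_⟩, ?_,
    ⟨60000 * Polynomial.X + 200000, ?_⟩⟩
  · intro i
    refine ⟨?_, ?_⟩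
    · simp [isFO, noEpsF, noEpsTs, noEpsT]
    · simpa using fo_Df i
  · intro i
    have := sz_sub_Dg i
    simp [seqSize, szF, szTs, szT]
    omega
  · rintro f ⟨k, hf⟩ h
    obtain ⟨d, -, hc, hd⟩ := h (2 * k + 4)
    have h1 := lower (2 * k + 3) d hc
    have h2 := growth k
    have h3 := hf (2 * k + 4)
    simp only at hd h1
    exact absurd (h1.trans (hd.trans h3)) (not_le.2 h2)
  · intro i
    obtain ⟨-, -, d, hd, hs⟩ := upper i
    refine ⟨d, hd, hs.trans ?_⟩
    simp
    omega

end EpsCalc
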